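/- arXiv:1802.06109 — 5 statements merged into one kernel-verified Lean document; each statement's English description precedes it below -/
import Mathlib

section
/- Fix an integer N ≥ 0. Define E_N := {(f,g) ∈ T × T : f − g·S^N is compact} and χ_N := (S^N S^{*N}, 1). Then χ_N is a self-adjoint idempotent belonging to B̄, E_N is a left B̄-submodule of T × T under the componentwise action, and the map Ψ_N(f,g) := (f S^{*N}, g) is a well-defined bijection from E_N onto B̄χ_N := {x·χ_N : x ∈ B̄} satisfying Ψ_N((a,b)·(f,g)) = (a,b)·Ψ_N(f,g) for all (a,b) ∈ B̄ and (f,g) ∈ E_N. Hence the left B̄-modules E_N (the fibre-product quantum line bundle of winding number N over the glued quantum 2-sphere) and B̄χ_N are isomorphic. -/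
/-!
The shift is an isometry, `S* S = 1`, and `1 - S S*` is the rank-one projection onto `e 0`
(`one_sub_shift_mul_star`). By induction `S*^N S^N = 1` and `1 - S^N S*^N` is compact
(`isCompactOperator_one_sub_pow`), so `χ` is a projection in `B̄`.

For `(f, g) ∈ E` the identity `f S*^N - g = (f - g S^N) S*^N - g (1 - S^N S*^N)` shows that
`Ψ (f, g) = (f S*^N, g)` lies in `B̄`, and it is fixed by right multiplication by `χ`, hence lies
in `B̄ χ`. Right multiplication of the first component by `S^N` inverts `Ψ`: it sends
`(a, b) χ` to `(a S^N, b)`, which lies in `E` because `a S^N - b S^N = (a - b) S^N` is compact.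
-/

section Shift

variable {H : Type*} [NormedAddCommGroup H] [InnerProductSpace ℂ H]

theorem HilbertBasis.clm_ext (e : HilbertBasis ℕ ℂ H) {A B : H →L[ℂ] H}
    (h : ∀ n, A (e n) = B (e n)) : A = B := by
  refine ContinuousLinearMap.ext_on (s := Set.range e) ?_ ?_
  · exact Submodule.dense_iff_topologicalClosure_eq_top.mpr e.dense_span
  · rintro _ ⟨n, rfl⟩
    exact h n

theorem HilbertBasis.ext_inner (e : HilbertBasis ℕ ℂ H) {x y : H}
    (h : ∀ n, inner ℂ (e n) x = inner ℂ (e n) y) : x = y := by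
  apply e.repr.injective
  ext n
  simpa [e.repr_apply_apply] using h n

theorem isCompactOperator_mul_left (A : H →L[ℂ] H) {K : H →L[ℂ] H} (hK : IsCompactOperator ⇑K) :
    IsCompactOperator ⇑(A * K) :=
  hK.clm_comp A

theorem isCompactOperator_mul_right {K : H →L[ℂ] H} (hK : IsCompactOperator ⇑K) (A : H →L[ℂ] H) :
    IsCompactOperator ⇑(K * A) :=
  hK.comp_clm A

variable [CompleteSpace H]

theorem star_shift_mul_shift (e : HilbertBasis ℕ ℂ H) {S : H →L[ℂ] H}
    (hS : ∀ n : ℕ, S (e n) = e (n + 1)) : star S * S = 1 := by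
  refine e.clm_ext fun n => e.ext_inner fun m => ?_
  have ho := orthonormal_iff_ite.mp e.orthonormal
  simp [ContinuousLinearMap.star_eq_adjoint, ContinuousLinearMap.adjoint_inner_right, hS, ho]

theorem star_shift_apply_zero (e : HilbertBasis ℕ ℂ H) {S : H →L[ℂ] H}
    (hS : ∀ n : ℕ, S (e n) = e (n + 1)) : star S (e 0) = 0 := by
  refine e.ext_inner fun m => ?_
  have ho := orthonormal_iff_ite.mp e.orthonormal
  simp [ContinuousLinearMap.star_eq_adjoint, ContinuousLinearMap.adjoint_inner_right, hS, ho]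

/-- The defect `1 - S S*` of the shift is the rank-one projection onto the line of `e 0`. -/
theorem one_sub_shift_mul_star (e : HilbertBasis ℕ ℂ H) {S : H →L[ℂ] H}
    (hS : ∀ n : ℕ, S (e n) = e (n + 1)) :
    1 - S * star S = InnerProductSpace.rankOne ℂ (e 0) (e 0) := by
  have ho := orthonormal_iff_ite.mp e.orthonormal
  refine e.clm_ext fun n => ?_
  cases n with
  | zero => simp [star_shift_apply_zero e hS, e.orthonormal.1 0]
  | succ n =>
    have h : star S (e (n + 1)) = e n := by
      rw [← hS]
      exact congrArg (fun A : H →L[ℂ] H => A (e n)) (star_shift_mul_shift e hS)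
    simp [h, hS, ho]

theorem isCompactOperator_one_sub_shift (e : HilbertBasis ℕ ℂ H) {S : H →L[ℂ] H}
    (hS : ∀ n : ℕ, S (e n) = e (n + 1)) : IsCompactOperator ⇑(1 - S * star S) := by
  rw [one_sub_shift_mul_star e hS, InnerProductSpace.rankOne_def']
  have h : IsCompactOperator ⇑(innerSL ℂ (e 0)) :=
    isCompactOperator_of_locallyCompactSpace_dom (innerSL ℂ (e 0))
  exact h.clm_comp (ContinuousLinearMap.toSpanSingleton ℂ (e 0))

theorem star_pow_mul_pow (e : HilbertBasis ℕ ℂ H) {S : H →L[ℂ] H}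
    (hS : ∀ n : ℕ, S (e n) = e (n + 1)) (N : ℕ) : star S ^ N * S ^ N = 1 := by
  induction N with
  | zero => simp
  | succ N ih =>
    calc star S ^ (N + 1) * S ^ (N + 1) = star S ^ N * (star S * S) * S ^ N := by
          rw [pow_succ, pow_succ']; noncomm_ring
      _ = 1 := by rw [star_shift_mul_shift e hS, mul_one, ih]

theorem isCompactOperator_one_sub_pow (e : HilbertBasis ℕ ℂ H) {S : H →L[ℂ] H}
    (hS : ∀ n : ℕ, S (e n) = e (n + 1)) (N : ℕ) :
    IsCompactOperator ⇑(1 - S ^ N * star S ^ N) := by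
  induction N with
  | zero => simpa using (isCompactOperator_zero : IsCompactOperator (0 : H → H))
  | succ N ih =>
    have h : 1 - S ^ (N + 1) * star S ^ (N + 1)
        = (1 - S * star S) + S * (1 - S ^ N * star S ^ N) * star S := by
      rw [pow_succ', pow_succ]; noncomm_ring
    rw [h]
    exact (isCompactOperator_one_sub_shift e hS).add
      (isCompactOperator_mul_right (isCompactOperator_mul_left S ih) (star S))

end Shift

/-- For `N ≥ 0`, with `T` the Toeplitz algebra (the unital C*-subalgebra of
`B(ℓ²(ℕ))` generated by the unilateral shift `S`), `B̄ = {(a,b) ∈ T × T : a - b compact}`,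
`E_N = {(f,g) ∈ T × T : f - g·S^N compact}` and `χ_N = (S^N S^{*N}, 1)`:
`χ_N` is a self-adjoint idempotent in `B̄`, `E_N` is a left `B̄`-submodule of `T × T`, and
`Ψ_N (f,g) = (f S^{*N}, g)` is a `B̄`-linear bijection of `E_N` onto `B̄·χ_N`.  Hence the left
`B̄`-modules `E_N` and `B̄χ_N` are isomorphic. -/
theorem statement0
    {H : Type*} [NormedAddCommGroup H] [InnerProductSpace ℂ H] [CompleteSpace H]
    (e : HilbertBasis ℕ ℂ H) (S : H →L[ℂ] H)
    (hS : ∀ n : ℕ, S (e n) = e (n + 1)) (N : ℕ)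
    (T : StarSubalgebra ℂ (H →L[ℂ] H)) (hT : T = StarAlgebra.elemental ℂ S)
    (Bbar : Set ((H →L[ℂ] H) × (H →L[ℂ] H)))
    (hBbar : Bbar = {p : (H →L[ℂ] H) × (H →L[ℂ] H) | p.1 ∈ T ∧ p.2 ∈ T ∧ IsCompactOperator ⇑(p.1 - p.2)})
    (E : Set ((H →L[ℂ] H) × (H →L[ℂ] H)))
    (hE : E = {p : (H →L[ℂ] H) × (H →L[ℂ] H) | p.1 ∈ T ∧ p.2 ∈ T ∧ IsCompactOperator ⇑(p.1 - p.2 * S ^ N)})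
    (χ : (H →L[ℂ] H) × (H →L[ℂ] H)) (hχ : χ = (S ^ N * (star S) ^ N, 1)) :
    (star χ = χ ∧ χ * χ = χ ∧ χ ∈ Bbar) ∧
    ((0 : (H →L[ℂ] H) × (H →L[ℂ] H)) ∈ E ∧
      (∀ p ∈ E, ∀ r ∈ E, p + r ∈ E) ∧
      (∀ a ∈ Bbar, ∀ p ∈ E, (a.1 * p.1, a.2 * p.2) ∈ E)) ∧
    Set.BijOn (fun p : (H →L[ℂ] H) × (H →L[ℂ] H) => (p.1 * (star S) ^ N, p.2))
      E {x | ∃ a ∈ Bbar, x = (a.1 * χ.1, a.2 * χ.2)} ∧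
    (∀ a ∈ Bbar, ∀ p ∈ E,
      (a.1 * p.1 * (star S) ^ N, a.2 * p.2) = (a.1 * (p.1 * (star S) ^ N), a.2 * p.2)) := by
  have hST : S ∈ T := hT ▸ StarAlgebra.elemental.self_mem ℂ S
  have hPT : S ^ N ∈ T := pow_mem hST N
  have hQT : star S ^ N ∈ T := pow_mem (star_mem hST) N
  have hQP : star S ^ N * S ^ N = 1 := star_pow_mul_pow e hS N
  have hK : IsCompactOperator ⇑(1 - S ^ N * star S ^ N) := isCompactOperator_one_sub_pow e hS N
  have hstar : star (S ^ N * star S ^ N) = S ^ N * star S ^ N := by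
    simp [star_mul, star_pow]
  generalize S ^ N = P at *
  generalize star S ^ N = Q at *
  subst hχ hBbar hE
  have hQPQ : Q * (P * Q) = Q := by rw [← mul_assoc, hQP, one_mul]
  refine ⟨⟨?_, ?_, ?_, ?_, ?_⟩, ⟨?_, ?_, ?_⟩, ⟨?_, ?_, ?_⟩, ?_⟩
  · exact Prod.ext hstar (star_one _)
  · exact Prod.ext (by simp [mul_assoc, hQPQ]) (one_mul 1)
  · exact mul_mem hPT hQT
  · exact one_mem T
  · have h : P * Q - 1 = -(1 - P * Q) := by abel
    change IsCompactOperator ⇑(P * Q - 1)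
    rw [h]
    exact hK.neg
  · refine ⟨zero_mem T, zero_mem T, ?_⟩
    simpa using (isCompactOperator_zero : IsCompactOperator (0 : H → H))
  · rintro ⟨f, g⟩ ⟨hf, hg, hc⟩ ⟨f', g'⟩ ⟨hf', hg', hc'⟩
    refine ⟨add_mem hf hf', add_mem hg hg', ?_⟩
    have h : (f + f') - (g + g') * P = (f - g * P) + (f' - g' * P) := by noncomm_ring
    change IsCompactOperator ⇑((f + f') - (g + g') * P)
    rw [h]
    exact hc.add hc'
  · rintro ⟨a, b⟩ ⟨ha, hb, hab⟩ ⟨f, g⟩ ⟨hf, hg, hc⟩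
    refine ⟨mul_mem ha hf, mul_mem hb hg, ?_⟩
    have h : a * f - b * g * P = (a - b) * f + b * (f - g * P) := by noncomm_ring
    change IsCompactOperator ⇑(a * f - b * g * P)
    rw [h]
    exact (isCompactOperator_mul_right hab f).add (isCompactOperator_mul_left b hc)
  · rintro ⟨f, g⟩ ⟨hf, hg, hc⟩
    refine ⟨(f * Q, g), ⟨mul_mem hf hQT, hg, ?_⟩, ?_⟩
    · have h : f * Q - g = (f - g * P) * Q - g * (1 - P * Q) := by noncomm_ring
      change IsCompactOperator ⇑(f * Q - g)
      rw [h]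
      exact (isCompactOperator_mul_right hc Q).sub (isCompactOperator_mul_left g hK)
    · simp [mul_assoc, hQPQ]
  · rintro ⟨f, g⟩ - ⟨f', g'⟩ - h
    obtain ⟨h1, h2⟩ := Prod.mk.inj h
    refine Prod.ext ?_ h2
    simpa [mul_assoc, hQP] using congrArg (· * P) h1
  · rintro _ ⟨⟨a, b⟩, ⟨ha, hb, hab⟩, rfl⟩
    refine ⟨(a * P, b), ⟨mul_mem ha hPT, hb, ?_⟩, ?_⟩
    · change IsCompactOperator ⇑(a * P - b * P)
      rw [← sub_mul]
      exact isCompactOperator_mul_right hab P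
    · simp [mul_assoc]
  · rintro a - p -
    rw [mul_assoc]
end

section
/- Fix p, q ∈ (0,1) and an integer n ≥ 1. In the *-algebra O(S³_{pq}), with A := 1 − a a*, the identity Σ_{k=0}^{n} binom(n,k)_q · q^{n−k} · A^{n−k} b^{n−k} a^{*k} a^{k} b^{*(n−k)} = 1 holds. Consequently, setting (X_{−n})_k := a^k b^{*(n−k)} and (Y_{−n})_k := binom(n,k)_q q^{n−k} A^{n−k} b^{n−k} a^{*k} for k = 0,…,n, one has Y_{−n}^T X_{−n} = 1, and the (n+1)×(n+1) matrix E_{−n} := X_{−n} Y_{−n}^T over O(S³_{pq}) is an idempotent: E_{−n}² = E_{−n}. -/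
/-!
Write `x = qA` and `(x; q)_k = ∏_{i<k} (1 - q^i x)`. The relations give `a*a = 1 - qA` and
`A a = q a A`, whence `a*^k a^k = (x; q)_k` (`star_pow_mul_pow`). Since `A` commutes with `b` and
`b*` and `A b b* = A`, also `A^m b^m b*^m = A^m` (`pow_absorb`). So the `k`-th summand equals
`binom(n,k)_q x^{n-k} (x; q)_k`, and the identity reduces to the commutative one
`∑_k binom(n,k)_q x^{n-k} (x; q)_k = 1` (`sum_gauss`). By the Pascal rule
`binom(n+1,k+1) = binom(n,k) + q^{k+1} binom(n,k+1)`, passing from `n` to `n + 1` multiplies the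
`k`-th summand by `(1 - q^k x) + q^k x = 1`, so that sum does not depend on `n`.
Idempotency of `E = X Yᵀ` follows from `Yᵀ X = 1`. The commutative identity is proved in `ℂ[X]`
and transported to `R` by evaluating at `A`.
-/

/-- The `x`-binomial coefficient `binom(n,k)_x`. -/
noncomputable def qBinom (x : ℝ) (n k : ℕ) : ℝ :=
  (∏ i ∈ Finset.range n, (1 - x ^ (i + 1))) /
    ((∏ i ∈ Finset.range k, (1 - x ^ (i + 1))) *
      (∏ i ∈ Finset.range (n - k), (1 - x ^ (i + 1))))

open Polynomial

/-- Gaussian binomial coefficients over any commutative ring, defined by the `q`-Pascal rule;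
unlike `qBinom`, they vanish for `k > n`. -/
def gauss {S : Type*} [CommRing S] (q : S) : ℕ → ℕ → S
  | _, 0 => 1
  | 0, _ + 1 => 0
  | n + 1, k + 1 => gauss q n k + q ^ (k + 1) * gauss q n (k + 1)

theorem gauss_zero_right {S : Type*} [CommRing S] (q : S) (n : ℕ) : gauss q n 0 = 1 := by
  cases n <;> rfl

theorem gauss_eq_zero {S : Type*} [CommRing S] (q : S) (n : ℕ) :
    ∀ k, n < k → gauss q n k = 0 := by
  induction n with
  | zero =>
    intro k hk
    obtain ⟨k, rfl⟩ := Nat.exists_eq_succ_of_ne_zero hk.ne'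
    rfl
  | succ n ih =>
    intro k hk
    obtain ⟨k, rfl⟩ := Nat.exists_eq_succ_of_ne_zero (by omega : k ≠ 0)
    simp [gauss, ih k (by omega), ih (k + 1) (by omega)]

theorem gauss_mul_prod {S : Type*} [CommRing S] (q : S) (n : ℕ) :
    ∀ k m, n = k + m →
      gauss q n k * ((∏ i ∈ Finset.range k, (1 - q ^ (i + 1))) *
        ∏ i ∈ Finset.range m, (1 - q ^ (i + 1))) = ∏ i ∈ Finset.range n, (1 - q ^ (i + 1)) := by
  induction n with
  | zero =>
    intro k m h
    obtain ⟨rfl, rfl⟩ : k = 0 ∧ m = 0 := by omega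
    simp [gauss]
  | succ n ih =>
    intro k m h
    cases k with
    | zero =>
      obtain rfl : m = n + 1 := by omega
      simp [gauss]
    | succ k =>
      cases m with
      | zero =>
        obtain rfl : n = k := by omega
        have h1 := ih n 0 rfl
        simp only [Finset.range_zero, Finset.prod_empty, mul_one] at h1 ⊢
        rw [gauss, gauss_eq_zero q n (n + 1) (by omega), Finset.prod_range_succ]
        linear_combination (1 - q ^ (n + 1)) * h1
      | succ m =>
        have h1 := ih k (m + 1) (by omega)
        have h2 := ih (k + 1) m (by omega)
        obtain rfl : n = k + (m + 1) := by omega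
        rw [gauss]
        rw [Finset.prod_range_succ _ (k + (m + 1))]
        rw [Finset.prod_range_succ _ k] at h2 ⊢
        rw [Finset.prod_range_succ _ m] at h1 ⊢
        linear_combination (1 - q ^ (k + 1)) * h1 + q ^ (k + 1) * (1 - q ^ (m + 1)) * h2

theorem qBinom_eq_gauss {q : ℝ} (hq : q ∈ Set.Ioo (0 : ℝ) 1) {n k : ℕ} (hk : k ≤ n) :
    qBinom q n k = gauss q n k := by
  have hne : ∀ m, ∏ i ∈ Finset.range m, (1 - q ^ (i + 1)) ≠ 0 := fun m =>
    Finset.prod_ne_zero_iff.2 fun i _ =>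
      (sub_pos.2 (pow_lt_one₀ hq.1.le hq.2 (Nat.succ_ne_zero i))).ne'
  rw [qBinom, div_eq_iff (mul_ne_zero (hne _) (hne _))]
  exact (gauss_mul_prod q n k (n - k) (by omega)).symm

theorem map_gauss {S T : Type*} [CommRing S] [CommRing T] (φ : S →+* T) (q : S) (n : ℕ) :
    ∀ k, φ (gauss q n k) = gauss (φ q) n k := by
  induction n with
  | zero => rintro (_ | k) <;> simp [gauss]
  | succ n ih => rintro (_ | k) <;> simp [gauss, ih]

/-- A `q`-analogue of the binomial theorem for `(x + (1 - x))^n`. -/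
theorem sum_gauss {S : Type*} [CommRing S] (q x : S) (n : ℕ) :
    ∑ k ∈ Finset.range (n + 1),
      gauss q n k * x ^ (n - k) * ∏ i ∈ Finset.range k, (1 - q ^ i * x) = 1 := by
  induction n with
  | zero => simp [gauss]
  | succ n ih =>
    -- the second half of the Pascal rule, reindexed by `k + 1 ↦ k`
    have key : ∑ k ∈ Finset.range (n + 1), q ^ (k + 1) * gauss q n (k + 1) * x ^ (n - k) *
          ∏ i ∈ Finset.range (k + 1), (1 - q ^ i * x) + x ^ (n + 1)
        = ∑ k ∈ Finset.range (n + 1), q ^ k * gauss q n k * x ^ (n + 1 - k) *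
          ∏ i ∈ Finset.range k, (1 - q ^ i * x) := by
      have h := Finset.sum_range_succ' (fun k => q ^ k * gauss q n k * x ^ (n + 1 - k) *
          ∏ i ∈ Finset.range k, (1 - q ^ i * x)) (n + 1)
      rw [Finset.sum_range_succ, gauss_eq_zero q n (n + 1) (by omega)] at h
      simpa [gauss_zero_right] using h.symm
    rw [Finset.sum_range_succ']
    simp only [gauss, Nat.add_sub_add_right, add_mul, Finset.sum_add_distrib]
    simp only [Finset.range_zero, Finset.prod_empty, Nat.sub_zero, one_mul, mul_one]
    rw [add_assoc, key, ← Finset.sum_add_distrib]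
    refine Eq.trans (Finset.sum_congr rfl fun k hk => ?_) ih
    have hk' : n + 1 - k = (n - k) + 1 := by
      have := Finset.mem_range.1 hk
      omega
    rw [Finset.prod_range_succ, hk']
    ring

/-- `a*^k a^k = (qA; q)_k`, the only input being `a*a = 1 - qA` and `A a = q a A`. -/
theorem star_pow_mul_pow_s4 {R : Type*} [Ring R] [Algebra ℂ R] (q : ℂ) (a s A : R)
    (h1 : s * a = 1 - q • A) (h2 : A * a = q • (a * A)) (k : ℕ) :
    s ^ k * a ^ k = aeval A (∏ i ∈ Finset.range k, (1 - C q ^ i * (C q * X)) : ℂ[X]) := by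
  have h3 : ∀ k : ℕ, A * a ^ k = q ^ k • (a ^ k * A) := by
    intro k
    induction k with
    | zero => simp
    | succ k ih =>
      rw [pow_succ, ← mul_assoc, ih, smul_mul_assoc, mul_assoc, h2, mul_smul_comm, smul_smul,
        ← mul_assoc, pow_succ]
  induction k with
  | zero => simp
  | succ k ih =>
    have : s ^ (k + 1) * a ^ (k + 1) = s ^ k * (s * a) * a ^ k := by
      rw [pow_succ s, pow_succ' a]; simp only [mul_assoc]
    rw [this, h1, Finset.prod_range_succ, map_mul, ← ih, mul_sub, sub_mul, mul_one,
      mul_smul_comm, smul_mul_assoc, mul_assoc, h3, mul_smul_comm, smul_smul, ← mul_assoc,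
      map_sub, map_one, mul_sub, mul_one]
    have : (C q ^ k * (C q * X) : ℂ[X]) = C (q * q ^ k) * X := by
      rw [C_mul, C_pow]; ring
    rw [this, map_mul, aeval_C, aeval_X, ← Algebra.smul_def, mul_smul_comm]

theorem pow_absorb {R : Type*} [Ring R] (A b t : R) (hb : A * b = b * A)
    (h : A * (b * t) = A) (m : ℕ) : A ^ m * b ^ m * t ^ m = A ^ m := by
  induction m with
  | zero => simp
  | succ m ih =>
    have hc : Commute A (b ^ m) := Commute.pow_right hb m
    calc A ^ (m + 1) * b ^ (m + 1) * t ^ (m + 1)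
        = A ^ m * (A * b ^ m) * (b * t) * t ^ m := by
          rw [pow_succ A, pow_succ b, pow_succ' t]; simp only [mul_assoc]
      _ = A ^ m * b ^ m * (A * (b * t)) * t ^ m := by rw [hc.eq]; simp only [mul_assoc]
      _ = A ^ m * (A * b ^ m) * t ^ m := by rw [h, hc.eq]; simp only [mul_assoc]
      _ = A * (A ^ m * b ^ m * t ^ m) := by
          rw [← mul_assoc, ← pow_succ, pow_succ']; simp only [mul_assoc]
      _ = A ^ (m + 1) := by rw [ih, pow_succ']

/-- In the *-algebra `O(S³_{pq})` (formalized via its universal property: in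
any unital complex *-algebra with elements `a`, `b` satisfying the defining relations), with
`A = 1 - a a*`, the identity
`Σ_{k=0}^{n} binom(n,k)_q q^{n-k} A^{n-k} b^{n-k} a^{*k} a^k b^{*(n-k)} = 1` holds; hence with
`(X_{-n})_k = a^k b^{*(n-k)}` and `(Y_{-n})_k = binom(n,k)_q q^{n-k} A^{n-k} b^{n-k} a^{*k}`
one has `Y_{-n}ᵀ X_{-n} = 1` and the matrix `E_{-n} = X_{-n} Y_{-n}ᵀ` is an idempotent. -/
theorem statement4 (p q : ℝ) (hp : p ∈ Set.Ioo (0 : ℝ) 1) (hq : q ∈ Set.Ioo (0 : ℝ) 1)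
    (n : ℕ) (hn : 1 ≤ n)
    (R : Type*) [Ring R] [Algebra ℂ R] [StarRing R] [StarModule ℂ R]
    (a b : R)
    (rel1 : star a * a - (q : ℂ) • (a * star a) = ((1 - q : ℝ) : ℂ) • (1 : R))
    (rel2 : star b * b - (p : ℂ) • (b * star b) = ((1 - p : ℝ) : ℂ) • (1 : R))
    (rel3 : (1 - a * star a) * (1 - b * star b) = 0)
    (rel4 : a * b = b * a) (rel5 : star a * b = b * star a)
    (A : R) (hA : A = 1 - a * star a)
    (X Y : Fin (n + 1) → R)
    (hX : ∀ k : Fin (n + 1), X k = a ^ (k : ℕ) * (star b) ^ (n - (k : ℕ)))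
    (hY : ∀ k : Fin (n + 1), Y k = ((qBinom q n (k : ℕ) * q ^ (n - (k : ℕ)) : ℝ) : ℂ) •
      (A ^ (n - (k : ℕ)) * b ^ (n - (k : ℕ)) * (star a) ^ (k : ℕ)))
    (E : Matrix (Fin (n + 1)) (Fin (n + 1)) R)
    (hE : E = Matrix.of fun i j => X i * Y j) :
    (∑ k : Fin (n + 1), Y k * X k) = 1 ∧ E * E = E := by
  have h1 : star a * a = 1 - (q : ℂ) • A := by
    rw [sub_eq_iff_eq_add] at rel1
    rw [rel1, hA, smul_sub, Complex.ofReal_sub, sub_smul,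
      Complex.ofReal_one, one_smul]
    abel
  have h2 : A * a = (q : ℂ) • (a * A) := by
    have : A * a = a * (1 - star a * a) := by rw [hA]; noncomm_ring
    rw [this, h1, sub_sub_cancel, mul_smul_comm]
  have hab' : star b * a = a * star b := by simpa using congrArg star rel5
  have hab : Commute (star a) (star b) := by
    have := congrArg star rel4
    rw [star_mul, star_mul] at this
    exact this.symm
  have hAb : A * b = b * A := by
    rw [hA, sub_mul, mul_sub, one_mul, mul_one, mul_assoc, rel5, ← mul_assoc, rel4, mul_assoc]
  have hAbb : A * (b * star b) = A := by
    rw [← hA, mul_sub, mul_one, sub_eq_zero] at rel3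
    exact rel3.symm
  have hsum : (∑ k : Fin (n + 1), Y k * X k) = 1 := by
    have hid := congrArg (aeval A) (sum_gauss (C (q : ℂ)) (C (q : ℂ) * Polynomial.X) n)
    rw [map_one, map_sum] at hid
    rw [← hid, ← Fin.sum_univ_eq_sum_range (fun k => aeval A (gauss (C (q : ℂ)) n k *
      (C (q : ℂ) * Polynomial.X) ^ (n - k) *
        ∏ i ∈ Finset.range k, (1 - C (q : ℂ) ^ i * (C (q : ℂ) * Polynomial.X)))) (n + 1)]
    refine Finset.sum_congr rfl fun k _ => ?_
    rw [hX, hY]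
    have hk : (k : ℕ) ≤ n := by omega
    generalize (k : ℕ) = j at hk ⊢
    have hc : Commute (star a ^ j * a ^ j) (star b ^ (n - j)) :=
      (hab.pow_pow _ _).mul_left (Commute.pow_pow (show Commute a (star b) from hab'.symm) _ _)
    have hg : gauss (C (q : ℂ)) n j = C ((gauss q n j : ℝ) : ℂ) := by
      have e1 := map_gauss (C : ℂ →+* ℂ[X]) (q : ℂ) n j
      have e2 := map_gauss Complex.ofRealHom q n j
      simp only [Complex.ofRealHom_eq_coe] at e2
      rw [← e1, ← e2]
    have hterm : A ^ (n - j) * b ^ (n - j) * star a ^ j * (a ^ j * star b ^ (n - j)) =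
        A ^ (n - j) * (star a ^ j * a ^ j) := by
      calc _ = A ^ (n - j) * b ^ (n - j) * (star a ^ j * a ^ j * star b ^ (n - j)) := by
            simp only [mul_assoc]
        _ = A ^ (n - j) * b ^ (n - j) * star b ^ (n - j) * (star a ^ j * a ^ j) := by
            rw [hc.eq]; simp only [mul_assoc]
        _ = _ := by rw [pow_absorb A b (star b) hAb hAbb]
    rw [smul_mul_assoc, hterm, star_pow_mul_pow_s4 (q : ℂ) a (star a) A h1 h2, qBinom_eq_gauss hq hk,
      hg, map_mul, map_mul, mul_pow, map_mul, ← C_pow, aeval_C, aeval_C, aeval_X_pow,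
      ← mul_assoc, ← map_mul, ← Algebra.smul_def, smul_mul_assoc]
    push_cast
    rfl
  refine ⟨hsum, ?_⟩
  ext i j
  simp only [hE, Matrix.mul_apply, Matrix.of_apply]
  calc ∑ k, X i * Y k * (X k * Y j) = X i * (∑ k, Y k * X k) * Y j := by
        rw [Finset.mul_sum, Finset.sum_mul]
        exact Finset.sum_congr rfl fun k _ => by simp only [mul_assoc]
    _ = X i * Y j := by rw [hsum, mul_one]
end

section
/- For every q ∈ (0,1), the unital C*-subalgebra of B(ℓ²(ℕ)) generated by the weighted shift z_q coincides with the Toeplitz algebra T, the unital C*-subalgebra generated by the unilateral shift S. (This is the concrete form of the statement that the universal C*-algebra of the quantum disc is the Toeplitz algebra, independently of the deformation parameter q.) -/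
/-!
Write `w n = √(1 - q ^ (n + 1))`, so `z (e n) = w n • e (n + 1)`. Both inclusions rest on the bound
`‖T‖ ≤ sup |v n|` for a weighted shift `T (e n) = v n • e (n + 1)`
(`norm_le_of_weighted_shift`), used to approximate one generator in norm by elements of the
algebra generated by the other.

* `z ∈ C*(S)`: the rank-one projections `P k` onto `ℂ e k` lie in `C*(S)`, since
  `P 0 = 1 - S S*` and `P (k + 1) = S (P k) S*`. The operator
  `S (1 - ∑ k < N, (1 - w k) P k)` is a weighted shift whose weights agree with those of `z` below
  index `N` and are `1` afterwards, so it is within `q ^ (N + 1)` of `z`.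
* `S ∈ C*(z)`: one has `z* z (e n) = (1 - q ^ (n + 1)) e n`, with eigenvalues in `[1 - q, 1]`. If a
  polynomial `p` is uniformly close to `t ↦ 1 / √t` on that interval (Weierstrass), then
  `z p(z* z)` is a weighted shift with weights close to `1`, hence is close to `S`.
-/

open scoped InnerProductSpace

section WeightedShift

variable {H : Type*} [NormedAddCommGroup H] [InnerProductSpace ℂ H]

lemma eq_of_forall_inner_basis_eq (e : HilbertBasis ℕ ℂ H) {x y : H}
    (h : ∀ n, ⟪e n, x⟫_ℂ = ⟪e n, y⟫_ℂ) : x = y := by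
  apply e.repr.injective
  ext n
  simpa only [e.repr_apply_apply] using h n

lemma clm_ext_basis {F : Type*} [NormedAddCommGroup F] [NormedSpace ℂ F]
    (e : HilbertBasis ℕ ℂ H) {A B : H →L[ℂ] F} (h : ∀ n, A (e n) = B (e n)) : A = B := by
  refine ContinuousLinearMap.ext_on (s := Set.range e) ?_ ?_
  · exact (Submodule.dense_iff_topologicalClosure_eq_top).2 e.dense_span
  · rintro _ ⟨n, rfl⟩
    exact h n

lemma inner_basis_basis (e : HilbertBasis ℕ ℂ H) (m n : ℕ) :
    ⟪e m, e n⟫_ℂ = if m = n then 1 else 0 :=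
  orthonormal_iff_ite.1 e.orthonormal m n

lemma hasSum_norm_sq_inner (e : HilbertBasis ℕ ℂ H) (x : H) :
    HasSum (fun n => ‖⟪e n, x⟫_ℂ‖ ^ 2) (‖x‖ ^ 2) := by
  have h := e.hasSum_inner_mul_inner x x
  rw [inner_self_eq_norm_sq_to_K] at h
  have h2 := Complex.hasSum_re h
  convert h2 using 1
  · ext n
    rw [← inner_conj_symm x (e n), ← Complex.normSq_eq_conj_mul_self, Complex.ofReal_re,
      Complex.normSq_eq_norm_sq]
  · norm_cast

/-- A weighted shift is bounded in operator norm by any bound for its weights. -/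
lemma norm_le_of_weighted_shift (e : HilbertBasis ℕ ℂ H) (T : H →L[ℂ] H) (v : ℕ → ℂ)
    (hT : ∀ n, T (e n) = v n • e (n + 1)) (C : ℝ) (hC : 0 ≤ C) (hv : ∀ n, ‖v n‖ ≤ C) :
    ‖T‖ ≤ C := by
  have h0 (x : H) : ⟪e 0, T x⟫_ℂ = 0 := by
    have : (innerSL ℂ (e 0)).comp T = 0 := clm_ext_basis e fun n => by
      simp [hT, inner_basis_basis]
    simpa using DFunLike.congr_fun this x
  have hs (n : ℕ) (x : H) : ⟪e (n + 1), T x⟫_ℂ = v n * ⟪e n, x⟫_ℂ := by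
    have : (innerSL ℂ (e (n + 1))).comp T = v n • innerSL ℂ (e n) := clm_ext_basis e fun m => by
      by_cases hm : n = m
      · subst hm
        simp [hT, e.orthonormal.norm_eq_one]
      · simp [hT, inner_basis_basis, hm]
    simpa using DFunLike.congr_fun this x
  refine ContinuousLinearMap.opNorm_le_bound _ hC fun x => ?_
  refine le_of_sq_le_sq ?_ (by positivity)
  have hTx := hasSum_norm_sq_inner e (T x)
  rw [← hasSum_nat_add_iff' 1] at hTx
  simp only [Finset.sum_range_one, h0, hs, norm_zero] at hTx
  have hx := (hasSum_norm_sq_inner e x).mul_left (C ^ 2)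
  have := hasSum_le (fun n => ?_) hTx hx
  · rw [mul_pow]
    simpa using this
  · rw [norm_mul, mul_pow]
    gcongr
    exact hv n

variable [CompleteSpace H]

lemma star_apply_basis_zero (e : HilbertBasis ℕ ℂ H) (T : H →L[ℂ] H) (v : ℕ → ℂ)
    (hT : ∀ n, T (e n) = v n • e (n + 1)) : star T (e 0) = 0 := by
  refine eq_of_forall_inner_basis_eq e fun n => ?_
  rw [ContinuousLinearMap.star_eq_adjoint, ContinuousLinearMap.adjoint_inner_right, hT]
  simp [inner_smul_left, inner_basis_basis]

lemma star_apply_basis_succ (e : HilbertBasis ℕ ℂ H) (T : H →L[ℂ] H) (v : ℕ → ℂ)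
    (hT : ∀ n, T (e n) = v n • e (n + 1)) (n : ℕ) :
    star T (e (n + 1)) = star (v n) • e n := by
  refine eq_of_forall_inner_basis_eq e fun m => ?_
  rw [ContinuousLinearMap.star_eq_adjoint, ContinuousLinearMap.adjoint_inner_right, hT]
  by_cases hm : m = n
  · subst hm
    simp [inner_smul_left, e.orthonormal.norm_eq_one]
  · simp [inner_smul_left, inner_basis_basis, hm]

/-- The rank-one projection onto `ℂ e k` lies in the Toeplitz algebra. -/
lemma exists_projection_mem (e : HilbertBasis ℕ ℂ H) (S : H →L[ℂ] H)
    (hS : ∀ n : ℕ, S (e n) = e (n + 1)) (k : ℕ) :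
    ∃ P ∈ StarAlgebra.elemental ℂ S, ∀ n, P (e n) = if n = k then e n else 0 := by
  have hS' : ∀ n, S (e n) = (fun _ => (1 : ℂ)) n • e (n + 1) := by simpa using hS
  have h0 := star_apply_basis_zero e S _ hS'
  have h1 (n : ℕ) : star S (e (n + 1)) = e n := by
    simpa using star_apply_basis_succ e S _ hS' n
  have hmem := StarAlgebra.elemental.self_mem ℂ S
  induction k with
  | zero =>
    refine ⟨1 - S * star S, sub_mem (one_mem _) (mul_mem hmem (star_mem hmem)), ?_⟩
    rintro (_ | n)
    · simp [h0]
    · simp [h1, hS]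
  | succ k ih =>
    obtain ⟨P, hP, hPe⟩ := ih
    refine ⟨S * P * star S, mul_mem (mul_mem hmem hP) (star_mem hmem), ?_⟩
    rintro (_ | n)
    · simp [h0]
    · by_cases hn : n = k
      · simp [h1, hPe, hS, hn]
      · simp [h1, hPe, hn]

lemma weighted_shift_mem (e : HilbertBasis ℕ ℂ H) (S : H →L[ℂ] H)
    (hS : ∀ n : ℕ, S (e n) = e (n + 1)) (q : ℝ) (hq : q ∈ Set.Ioo (0 : ℝ) 1) (z : H →L[ℂ] H)
    (hz : ∀ n : ℕ, z (e n) = ((Real.sqrt (1 - q ^ (n + 1)) : ℝ) : ℂ) • e (n + 1)) :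
    z ∈ StarAlgebra.elemental ℂ S := by
  obtain ⟨hq0, hq1⟩ := hq
  choose P hP hPe using exists_projection_mem e S hS
  set w : ℕ → ℝ := fun n => Real.sqrt (1 - q ^ (n + 1)) with hw
  have hw1 (n : ℕ) : |w n - 1| ≤ q ^ (n + 1) := by
    have hpow : q ^ (n + 1) ≤ 1 := pow_le_one₀ hq0.le hq1.le
    have hpos : 0 < q ^ (n + 1) := by positivity
    have hle : w n ≤ 1 := Real.sqrt_le_one.2 (by linarith)
    have hge : 1 - q ^ (n + 1) ≤ w n := Real.le_sqrt_of_sq_le (by nlinarith)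
    rw [abs_le]
    constructor <;> linarith
  rw [← SetLike.mem_coe, ← (StarAlgebra.elemental.isClosed ℂ S).closure_eq, Metric.mem_closure_iff]
  intro ε hε
  obtain ⟨N, hN⟩ := exists_pow_lt_of_lt_one hε hq1
  refine ⟨S * (1 - ∑ k ∈ Finset.range N, ((1 - w k : ℝ) : ℂ) • P k), ?_, ?_⟩
  · exact mul_mem (StarAlgebra.elemental.self_mem ℂ S)
      (sub_mem (one_mem _) (sum_mem fun k _ => SMulMemClass.smul_mem _ (hP k)))
  · rw [dist_eq_norm]
    refine lt_of_le_of_lt (norm_le_of_weighted_shift e _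
      (fun n => if n < N then 0 else ((w n - 1 : ℝ) : ℂ)) ?_ (q ^ N) (by positivity) ?_) hN
    · intro n
      have hsum : (∑ k ∈ Finset.range N, ((1 - w k : ℝ) : ℂ) • P k) (e n) =
          (if n < N then ((1 - w n : ℝ) : ℂ) else 0) • e n := by
        simp [hPe]
      rw [sub_apply, mul_apply_eq_comp,
        sub_apply, hsum, one_apply_eq_self, map_sub, map_smul,
        hS, hz]
      by_cases hn : n < N
      · simp only [hn, if_true]
        push_cast
        module
      · simp only [hn, if_false]
        push_cast
        module
    · intro n
      by_cases hn : n < N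
      · simp only [hn, if_true, norm_zero]
        positivity
      · simp only [hn, if_false, Complex.norm_real, Real.norm_eq_abs]
        exact (hw1 n).trans (pow_le_pow_of_le_one hq0.le hq1.le (by omega))

lemma shift_mem (e : HilbertBasis ℕ ℂ H) (S : H →L[ℂ] H)
    (hS : ∀ n : ℕ, S (e n) = e (n + 1)) (q : ℝ) (hq : q ∈ Set.Ioo (0 : ℝ) 1) (z : H →L[ℂ] H)
    (hz : ∀ n : ℕ, z (e n) = ((Real.sqrt (1 - q ^ (n + 1)) : ℝ) : ℂ) • e (n + 1)) :
    S ∈ StarAlgebra.elemental ℂ z := by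
  obtain ⟨hq0, hq1⟩ := hq
  have hmem := StarAlgebra.elemental.self_mem ℂ z
  have hlam (n : ℕ) : 1 - q ^ (n + 1) ∈ Set.Icc (1 - q) 1 := by
    have hpos : 0 < q ^ (n + 1) := by positivity
    have hle : q ^ (n + 1) ≤ q := pow_le_of_le_one hq0.le hq1.le (by omega)
    constructor <;> linarith
  have hA (n : ℕ) : (star z * z) (e n) = ((1 - q ^ (n + 1) : ℝ) : ℂ) • e n := by
    have h := (hlam n).1
    rw [mul_apply_eq_comp, hz, map_smul, star_apply_basis_succ e z _ hz, smul_smul]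
    simp only [Complex.star_def, Complex.conj_ofReal]
    rw [← Complex.ofReal_mul, Real.mul_self_sqrt (by linarith)]
  have hpow (n k : ℕ) :
      ((star z * z) ^ k) (e n) = (((1 - q ^ (n + 1)) ^ k : ℝ) : ℂ) • e n := by
    induction k with
    | zero => simp
    | succ k ih =>
      rw [pow_succ, mul_apply_eq_comp, hA, map_smul, ih, smul_smul]
      congr 1
      push_cast
      ring
  rw [← SetLike.mem_coe, ← (StarAlgebra.elemental.isClosed ℂ z).closure_eq, Metric.mem_closure_iff]
  intro ε hε
  obtain ⟨p, hp⟩ := exists_polynomial_near_of_continuousOn (1 - q) 1 (fun t => (Real.sqrt t)⁻¹)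
    (Real.continuous_sqrt.continuousOn.inv₀ fun t ht =>
      (Real.sqrt_pos.2 (by linarith [ht.1])).ne') (ε / 2) (by positivity)
  -- `p(z* z)`, written out as a sum since `p` has real coefficients.
  refine ⟨z * ∑ k ∈ Finset.range (p.natDegree + 1), ((p.coeff k : ℝ) : ℂ) • (star z * z) ^ k,
    ?_, ?_⟩
  · exact mul_mem hmem (sum_mem fun k _ =>
      SMulMemClass.smul_mem _ (pow_mem (mul_mem (star_mem hmem) hmem) k))
  · rw [dist_eq_norm]
    refine lt_of_le_of_lt (norm_le_of_weighted_shift e _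
      (fun n => ((1 - Real.sqrt (1 - q ^ (n + 1)) * p.eval (1 - q ^ (n + 1)) : ℝ) : ℂ)) ?_ (ε / 2)
      (by positivity) ?_) (half_lt_self hε)
    · intro n
      have hsum : (∑ k ∈ Finset.range (p.natDegree + 1),
          ((p.coeff k : ℝ) : ℂ) • (star z * z) ^ k) (e n) =
          ((p.eval (1 - q ^ (n + 1)) : ℝ) : ℂ) • e n := by
        rw [Polynomial.eval_eq_sum_range, Complex.ofReal_sum, Finset.sum_smul,
          sum_apply]
        refine Finset.sum_congr rfl fun k _ => ?_
        rw [smul_apply, hpow, smul_smul, Complex.ofReal_mul]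
      rw [sub_apply, mul_apply_eq_comp, hsum, map_smul, hS, hz]
      push_cast
      module
    · intro n
      have h := hlam n
      have hs0 : 0 < Real.sqrt (1 - q ^ (n + 1)) := Real.sqrt_pos.2 (by linarith [h.1])
      have hs1 : Real.sqrt (1 - q ^ (n + 1)) ≤ 1 := Real.sqrt_le_one.2 h.2
      have hpn := (hp _ h).le
      rw [Complex.norm_real, Real.norm_eq_abs]
      calc |1 - Real.sqrt (1 - q ^ (n + 1)) * p.eval (1 - q ^ (n + 1))|
          = Real.sqrt (1 - q ^ (n + 1)) *
              |p.eval (1 - q ^ (n + 1)) - (Real.sqrt (1 - q ^ (n + 1)))⁻¹| := by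
            rw [← abs_of_pos hs0, ← abs_mul, abs_of_pos hs0, mul_sub, mul_inv_cancel₀ hs0.ne',
              abs_sub_comm]
        _ ≤ 1 * (ε / 2) := by gcongr
        _ = ε / 2 := one_mul _

end WeightedShift

/-- For every `q ∈ (0,1)`, the unital C*-subalgebra of `B(ℓ²(ℕ))` generated
by the weighted shift `z_q` coincides with the Toeplitz algebra, the unital C*-subalgebra
generated by the unilateral shift `S`. -/
theorem statement9
    {H : Type*} [NormedAddCommGroup H] [InnerProductSpace ℂ H] [CompleteSpace H]
    (e : HilbertBasis ℕ ℂ H) (S : H →L[ℂ] H)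
    (hS : ∀ n : ℕ, S (e n) = e (n + 1))
    (q : ℝ) (hq : q ∈ Set.Ioo (0 : ℝ) 1)
    (z : H →L[ℂ] H)
    (hz : ∀ n : ℕ, z (e n) = ((Real.sqrt (1 - q ^ (n + 1)) : ℝ) : ℂ) • e (n + 1)) :
    StarAlgebra.elemental ℂ z = StarAlgebra.elemental ℂ S :=
  le_antisymm
    (StarAlgebra.elemental.le_of_mem (StarAlgebra.elemental.isClosed ℂ S)
      (weighted_shift_mem e S hS q hq z hz))
    (StarAlgebra.elemental.le_of_mem (StarAlgebra.elemental.isClosed ℂ z)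
      (shift_mem e S hS q hq z hz))
end

section
/- Let A₀, A₁, A₀₁ be unital C*-algebras and π₀ : A₀ → A₀₁, π₁ : A₁ → A₀₁ unital *-homomorphisms. Let B₀ ⊆ A₀, B₁ ⊆ A₁, B₀₁ ⊆ A₀₁ be dense unital *-subalgebras such that π₀(B₀) ⊆ B₀₁ and the restriction of π₁ to B₁ maps B₁ onto B₀₁. If ker(π₁) ∩ B₁ is dense in ker(π₁), then the algebraic fibre product B₀ ×_{(π₀,π₁)} B₁ := {(b₀, b₁) ∈ B₀ × B₁ : π₀(b₀) = π₁(b₁)} is dense in the C*-algebra fibre product A₀ ×_{(π₀,π₁)} A₁ := {(a₀, a₁) ∈ A₀ × A₁ : π₀(a₀) = π₁(a₁)} with respect to the norm ‖(a₀,a₁)‖ = max(‖a₀‖, ‖a₁‖). -/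
/-!
The key point is that a *-homomorphism `π : A → C` of C*-algebras admits norm-controlled lifts:
if `‖π c‖ ≤ δ` with `δ > 0`, then some `x` with `‖x‖ ≤ δ` has `π x = π c`
(`exists_lift_norm_le`). By continuous functional calculus one may take `x = c * f (c⋆c)` with
`f t = δ / max δ √t`: this `f` equals `1` on `[0, δ²]`, which contains the spectrum of `π (c⋆c)`,
while `t * f t ^ 2 ≤ δ ^ 2` for `t ≥ 0`.

For `(a₀, a₁)` in the fibre product, choose `b₀ ∈ B₀` near `a₀` and `b ∈ B₁` with `π₁ b = π₀ b₀`.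
Then `π₁ (b - a₁) = π₀ (b₀ - a₀)` is small, so it has a small lift `x`, and `b - a₁ - x ∈ ker π₁`
is approximated by some `k ∈ B₁ ∩ ker π₁`. The pair `(b₀, b - k)` is the desired approximation.
-/

/-- Norm-controlled lifting along a *-homomorphism, with no surjectivity assumed. -/
theorem exists_lift_norm_le {A C : Type*} [CStarAlgebra A] [CStarAlgebra C]
    (π : A →⋆ₐ[ℂ] C) (c : A) {δ : ℝ} (hδ : 0 < δ) (hc : ‖π c‖ ≤ δ) :
    ∃ x : A, π x = π c ∧ ‖x‖ ≤ δ := by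
  -- The bound of the spectrum by the norm below needs `‖1‖ = 1` in `C`.
  rcases subsingleton_or_nontrivial C with _ | _
  · exact ⟨0, Subsingleton.elim _ _, by simpa using hδ.le⟩
  let f : ℝ → ℝ := fun t => δ / max δ √t
  have hpos : ∀ t, 0 < max δ √t := fun t => lt_max_of_lt_left hδ
  have hf : Continuous f :=
    continuous_const.div (continuous_const.max Real.continuous_sqrt) fun t => (hpos t).ne'
  have hπ : Continuous π := AddMonoidHomClass.continuous_of_bound π 1 fun a => by
    simpa using NonUnitalStarAlgHom.norm_apply_le π a
  have hsa : IsSelfAdjoint (star c * c) := IsSelfAdjoint.star_mul_self c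
  have hsa' : IsSelfAdjoint (π (star c * c)) := hsa.map π
  refine ⟨c * cfc f (star c * c), ?_, ?_⟩
  · have h1 : π (cfc f (star c * c)) = 1 := by
      have := StarAlgHomClass.map_cfc (R := ℝ) (S := ℂ) π f (star c * c) hf.continuousOn hπ hsa hsa'
      rw [this, ← cfc_one ℝ (π (star c * c)) hsa']
      refine cfc_congr fun t ht => ?_
      have h2 : ‖t‖ ≤ δ ^ 2 := by
        refine (spectrum.norm_le_norm_of_mem ht).trans ?_
        rw [map_mul, map_star, CStarRing.norm_star_mul_self, sq]
        gcongr
      have h3 : √t ≤ δ := Real.sqrt_le_iff.2 ⟨hδ.le, (le_abs_self t).trans h2⟩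
      simp [f, max_eq_left h3, hδ.ne']
    rw [map_mul, h1, mul_one]
  · have key : star (c * cfc f (star c * c)) * (c * cfc f (star c * c))
        = cfc (fun t => f t * t * f t) (star c * c) := by
      rw [cfc_mul (fun t => f t * t) f (star c * c) (by fun_prop) (by fun_prop),
        cfc_mul f (fun t => t) (star c * c) (by fun_prop) (by fun_prop), cfc_id' ℝ _ hsa,
        star_mul, (cfc_predicate f (star c * c) : IsSelfAdjoint _).star_eq]
      simp only [mul_assoc]
    have h2 : ‖c * cfc f (star c * c)‖ * ‖c * cfc f (star c * c)‖ ≤ δ * δ := by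
      rw [← CStarRing.norm_star_mul_self, key]
      refine norm_cfc_le (by positivity) fun t ht => ?_
      have ht0 : 0 ≤ t := spectrum_star_mul_self_nonneg t ht
      have hf0 : 0 ≤ f t := (div_pos hδ (hpos t)).le
      have h4 : f t * √t ≤ δ := by
        rw [div_mul_eq_mul_div, div_le_iff₀ (hpos t)]
        gcongr
        exact le_max_right _ _
      rw [Real.norm_of_nonneg (by positivity)]
      calc f t * t * f t = (f t * √t) * (f t * √t) := by
            nth_rewrite 2 [← Real.mul_self_sqrt ht0]; ring
        _ ≤ δ * δ := by gcongr
    exact abs_le_of_sq_le_sq' (by simpa [sq] using h2) hδ.le |>.2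


/-- Density criterion for fibre products (Hajac–Wagner).  Given unital
C*-algebras `A₀`, `A₁`, `A₀₁`, unital *-homomorphisms `π₀ : A₀ → A₀₁`, `π₁ : A₁ → A₀₁`, and
dense unital *-subalgebras `B₀ ⊆ A₀`, `B₁ ⊆ A₁`, `B₀₁ ⊆ A₀₁` with `π₀(B₀) ⊆ B₀₁` and `π₁`
mapping `B₁` onto `B₀₁`: if `ker(π₁) ∩ B₁` is dense in `ker(π₁)`, then the algebraic fibre
product `B₀ ×_{(π₀,π₁)} B₁` is dense in the C*-algebra fibre product `A₀ ×_{(π₀,π₁)} A₁`. -/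
theorem statement16
    {A₀ A₁ A₀₁ : Type*}
    [NormedRing A₀] [StarRing A₀] [CStarRing A₀] [CompleteSpace A₀]
    [NormedAlgebra ℂ A₀] [StarModule ℂ A₀]
    [NormedRing A₁] [StarRing A₁] [CStarRing A₁] [CompleteSpace A₁]
    [NormedAlgebra ℂ A₁] [StarModule ℂ A₁]
    [NormedRing A₀₁] [StarRing A₀₁] [CStarRing A₀₁] [CompleteSpace A₀₁]
    [NormedAlgebra ℂ A₀₁] [StarModule ℂ A₀₁]
    (π₀ : A₀ →⋆ₐ[ℂ] A₀₁) (π₁ : A₁ →⋆ₐ[ℂ] A₀₁)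
    (B₀ : StarSubalgebra ℂ A₀) (B₁ : StarSubalgebra ℂ A₁) (B₀₁ : StarSubalgebra ℂ A₀₁)
    (hd₀ : Dense (B₀ : Set A₀)) (hd₁ : Dense (B₁ : Set A₁)) (hd₀₁ : Dense (B₀₁ : Set A₀₁))
    (hmap₀ : ∀ x ∈ B₀, π₀ x ∈ B₀₁)
    (hmap₁ : ∀ x ∈ B₁, π₁ x ∈ B₀₁)
    (hsurj : ∀ y ∈ B₀₁, ∃ x ∈ B₁, π₁ x = y)
    (hker : ∀ x : A₁, π₁ x = 0 → x ∈ closure {b : A₁ | b ∈ B₁ ∧ π₁ b = 0}) :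
    ∀ p : A₀ × A₁, π₀ p.1 = π₁ p.2 →
      p ∈ closure {x : A₀ × A₁ | x.1 ∈ B₀ ∧ x.2 ∈ B₁ ∧ π₀ x.1 = π₁ x.2} := by
  let _ : CStarAlgebra A₀ := {}
  let _ : CStarAlgebra A₁ := {}
  let _ : CStarAlgebra A₀₁ := {}
  rintro ⟨a₀, a₁⟩ h
  change π₀ a₀ = π₁ a₁ at h
  rw [Metric.mem_closure_iff]
  intro ε hε
  obtain ⟨b₀, hb₀, h₀⟩ := Metric.mem_closure_iff.1 (hd₀ a₀) (ε / 2) (half_pos hε)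
  obtain ⟨b, hb, hbb⟩ := hsurj _ (hmap₀ b₀ hb₀)
  have hsmall : ‖π₁ (b - a₁)‖ ≤ ε / 2 := by
    rw [map_sub, hbb, ← h, ← map_sub]
    refine (NonUnitalStarAlgHom.norm_apply_le π₀ _).trans ?_
    rw [← dist_eq_norm, dist_comm]
    exact h₀.le
  obtain ⟨x, hx, hxn⟩ := exists_lift_norm_le π₁ (b - a₁) (half_pos hε) hsmall
  obtain ⟨k, ⟨hkB, hk⟩, hkd⟩ := Metric.mem_closure_iff.1
    (hker (b - a₁ - x) (by rw [map_sub, hx, sub_self])) (ε / 2) (half_pos hε)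
  refine ⟨(b₀, b - k), ⟨hb₀, sub_mem hb hkB, ?_⟩, ?_⟩
  · change π₀ b₀ = π₁ (b - k)
    rw [map_sub, hk, sub_zero, hbb]
  · rw [Prod.dist_eq, max_lt_iff]
    refine ⟨h₀.trans (half_lt_self hε), ?_⟩
    change dist a₁ (b - k) < ε
    rw [dist_comm, dist_eq_norm]
    rw [dist_eq_norm] at hkd
    calc ‖b - k - a₁‖ = ‖x + (b - a₁ - x - k)‖ := by congr 1; abel
      _ ≤ ‖x‖ + ‖b - a₁ - x - k‖ := norm_add_le _ _
      _ < ε := by linarith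
end

section
/- For all elements a, b of the Toeplitz algebra T, the commutator ab − ba is a compact operator on ℓ²(ℕ). Consequently, the image of T in the quotient by the compact operators is a commutative C*-algebra (this is the commutativity of the quotient T/K underlying the symbol map σ : T → C(S¹) with kernel K). -/
/-!
The self-commutator `S⋆ S - S S⋆` of the shift is the rank-one projection onto `e 0`, hence compact,
so `S` and `S⋆` commute modulo the compact operators. For a fixed `b`, the operators `a` whose
commutator with `b` is compact form a norm-closed unital subalgebra, because the compact operators
are a closed two-sided ideal (`commutator_compact_of_generators`). The elemental algebra of `S` is
the closure of the unital algebra generated by `S` and `S⋆`, so applying this once in each variable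
passes from the generators to all `a` and `b`.
-/

open scoped InnerProductSpace

/-- An operator that commutes modulo compacts with both `S` and `star S` commutes modulo compacts
with everything in the C⋆-algebra generated by `S`. -/
theorem commutator_compact_of_generators
    {H : Type*} [NormedAddCommGroup H] [InnerProductSpace ℂ H] [CompleteSpace H]
    (S b : H →L[ℂ] H)
    (h1 : IsCompactOperator ⇑(S * b - b * S))
    (h2 : IsCompactOperator ⇑(star S * b - b * star S)) :
    ∀ a ∈ StarAlgebra.elemental ℂ S, IsCompactOperator ⇑(a * b - b * a) := by
  have hclosed : IsClosed {a : H →L[ℂ] H | IsCompactOperator ⇑(a * b - b * a)} := by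
    have hcont : Continuous fun a : H →L[ℂ] H => a * b - b * a := by fun_prop
    exact (isClosed_setOfPred_isCompactOperator (σ₁₂ := RingHom.id ℂ) (M₁ := H)
      (M₂ := H)).preimage hcont
  intro a ha
  refine closure_minimal (s := (StarAlgebra.adjoin ℂ {S} : Set (H →L[ℂ] H))) ?_ hclosed ha
  intro x hx
  have hx' : x ∈ Algebra.adjoin ℂ ({S} ∪ star {S} : Set (H →L[ℂ] H)) := hx
  clear hx
  show IsCompactOperator ⇑(x * b - b * x)
  induction hx' using Algebra.adjoin_induction with
  | mem x hx =>
    rcases hx with hx | hx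
    · rw [Set.mem_singleton_iff.1 hx]; exact h1
    · rw [Set.star_singleton, Set.mem_singleton_iff] at hx
      rw [hx]; exact h2
  | algebraMap r =>
    rw [Algebra.commutes r b, sub_self]
    exact isCompactOperator_zero
  | add x y _ _ hx hy =>
    have : (x + y) * b - b * (x + y) = (x * b - b * x) + (y * b - b * y) := by noncomm_ring
    rw [this]
    exact hx.add hy
  | mul x y _ _ hx hy =>
    have : (x * y) * b - b * (x * y) = x * (y * b - b * y) + (x * b - b * x) * y := by
      noncomm_ring
    rw [this]
    exact (hy.clm_comp x).add (hx.comp_clm y)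

/-- The commutator is the rank-one projection `x ↦ ⟪e 0, x⟫ e 0`, as is checked on the basis
vectors. -/
theorem shift_self_commutator_compact
    {H : Type*} [NormedAddCommGroup H] [InnerProductSpace ℂ H] [CompleteSpace H]
    (e : HilbertBasis ℕ ℂ H) (S : H →L[ℂ] H)
    (hS : ∀ n : ℕ, S (e n) = e (n + 1)) :
    IsCompactOperator ⇑(star S * S - S * star S) := by
  have hcoef (m n : ℕ) : ⟪e m, e n⟫_ℂ = if m = n then 1 else 0 :=
    orthonormal_iff_ite.1 e.orthonormal m n
  have hext (x y : H) (h : ∀ m, ⟪e m, x⟫_ℂ = ⟪e m, y⟫_ℂ) : x = y := by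
    apply e.repr.injective
    ext m
    simpa only [e.repr_apply_apply] using h m
  have h0 : star S (e 0) = 0 := hext _ _ fun m => by
    rw [ContinuousLinearMap.star_eq_adjoint, ContinuousLinearMap.adjoint_inner_right, hS, hcoef]
    simp
  have hsucc (n : ℕ) : star S (e (n + 1)) = e n := hext _ _ fun m => by
    rw [ContinuousLinearMap.star_eq_adjoint, ContinuousLinearMap.adjoint_inner_right, hS, hcoef,
      hcoef]
    simp
  have key : star S * S - S * star S
      = (ContinuousLinearMap.toSpanSingleton ℂ (e 0)).comp (innerSL ℂ (e 0)) := by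
    refine ContinuousLinearMap.ext_on
      (Submodule.dense_iff_topologicalClosure_eq_top.2 e.dense_span) ?_
    rintro _ ⟨n, rfl⟩
    cases n with
    | zero => simp [hS, hsucc, h0, e.orthonormal.1 0]
    | succ n => simp [hS, hsucc, hcoef]
  rw [key]
  exact (isCompactOperator_of_locallyCompactSpace_rng
    (ContinuousLinearMap.toSpanSingleton ℂ (e 0))).comp_clm (innerSL ℂ (e 0))

/-- For all elements `a`, `b` of the Toeplitz algebra `T` (the unital
C*-subalgebra of `B(ℓ²(ℕ))` generated by the unilateral shift `S`), the commutator
`a b - b a` is a compact operator; consequently the image of `T` in the Calkin quotient is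
commutative. -/
theorem statement17
    {H : Type*} [NormedAddCommGroup H] [InnerProductSpace ℂ H] [CompleteSpace H]
    (e : HilbertBasis ℕ ℂ H) (S : H →L[ℂ] H)
    (hS : ∀ n : ℕ, S (e n) = e (n + 1)) :
    ∀ a ∈ StarAlgebra.elemental ℂ S, ∀ b ∈ StarAlgebra.elemental ℂ S,
      IsCompactOperator ⇑(a * b - b * a) := by
  have hswap (x y : H →L[ℂ] H) (h : IsCompactOperator ⇑(x * y - y * x)) :
      IsCompactOperator ⇑(y * x - x * y) := by
    rw [← neg_sub]
    exact h.neg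
  have hself (x : H →L[ℂ] H) : IsCompactOperator ⇑(x * x - x * x) := by
    rw [sub_self]
    exact isCompactOperator_zero
  have hc := shift_self_commutator_compact e S hS
  have hgen : ∀ b ∈ StarAlgebra.elemental ℂ S, IsCompactOperator ⇑(b * S - S * b) :=
    commutator_compact_of_generators S S (hself S) hc
  have hgen_star : ∀ b ∈ StarAlgebra.elemental ℂ S,
      IsCompactOperator ⇑(b * star S - star S * b) :=
    commutator_compact_of_generators S (star S) (hswap _ _ hc) (hself (star S))
  intro a ha b hb
  exact commutator_compact_of_generators S b (hswap _ _ (hgen b hb)) (hswap _ _ (hgen_star b hb))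
    a ha
end
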